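/- Let ν be a real number with ν ≥ 1. For every integer k ≥ 1 one has j_{ν,k} < λ⁻_{ν−1,k+1} < j′_{ν,k+1} < j_{ν,k+1}. -/

import Mathlib

/-- Bessel function of the first kind of real order `ν`, defined via its power series
`J_ν(z) = ∑ₘ (−1)^m / (m! Γ(ν+m+1)) (z/2)^(ν+2m)` (with real-exponent powers). -/
noncomputable def besselJ (ν z : ℝ) : ℝ :=
  ∑' m : ℕ, ((-1 : ℝ) ^ m / (Nat.factorial m * Real.Gamma (ν + m + 1))) *
    (z / 2) ^ (ν + 2 * (m : ℝ))

/-- `x` (indexed by `k ≥ 1`) enumerates the positive zeroes of `f`: it is strictly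
increasing on indices `k ≥ 1`, each `x k` is a positive zero of `f`, and every positive
zero of `f` is some `x k`. -/
def EnumPosZeros (f : ℝ → ℝ) (x : ℕ → ℝ) : Prop :=
  StrictMonoOn x (Set.Ici 1) ∧ (∀ k, 1 ≤ k → 0 < x k ∧ f (x k) = 0) ∧
    ∀ z : ℝ, 0 < z → f z = 0 → ∃ k, 1 ≤ k ∧ x k = z

/-!
Write `f = J_ν` with `ν > 0`. The form `L(z) = (z f′)² + (z² - ν²) f²` satisfies `L(0) = 0` and
`L′ = 2 z f²` (Lommel's formula for `2 ∫₀ᶻ t f(t)² dt`), so it is positive for `z > 0`. This single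
inequality has three consequences: the zeros of `f` are simple; every zero of `f′` exceeds `ν`;
and `r = z f′ / f`, whose derivative is `-L / (z f²)`, decreases strictly between zeros of `f`.

The zeros of `f′` are the solutions of `r = 0`, and the zeros of `J_{ν-1} - J_ν = f′ + (ν/z - 1) f`
are the solutions of `r = z - ν`. Both have at most one solution between consecutive zeros of
`f` (the origin included, as `f(0) = 0`), and Rolle's theorem for `f` and for `z ^ ν e⁻ᶻ f`,
whose derivative is `z ^ ν e⁻ᶻ (J_{ν-1} - J_ν)`, provides one. At the zero `q > ν` of `f′` one has
`r = 0 < q - ν`, so the solution of `r = z - ν` lies to the left of `q`.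
-/

open Set Filter Topology

theorem hasDerivAt_tsum_mul_pow {c : ℕ → ℝ} (hc : ∀ w : ℝ, Summable fun m ↦ c m * w ^ m) (w : ℝ) :
    HasDerivAt (fun w ↦ ∑' m, c m * w ^ m) (∑' m, (m + 1 : ℕ) * c (m + 1) * w ^ m) w := by
  set R := |w| + 1
  have one_le_R : 1 ≤ R := by simp [R]
  have norm_deriv_le : ∀ m, ∀ y ∈ Metric.ball (0 : ℝ) R,
      ‖c m * (m * y ^ (m - 1))‖ ≤ |c m * (2 * R) ^ m| := by
    intro m y hy
    have abs_y_le : |y| ≤ R := by simpa using (Metric.mem_ball.1 hy).le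
    have cast_le : (m : ℝ) ≤ 2 ^ m := mod_cast Nat.lt_two_pow_self.le
    have pow_le : |y| ^ (m - 1) ≤ R ^ m :=
      (pow_le_pow_left₀ (abs_nonneg y) abs_y_le _).trans
        (pow_le_pow_right₀ one_le_R (Nat.sub_le m 1))
    rw [Real.norm_eq_abs, abs_mul, abs_mul, abs_mul, abs_pow, Nat.abs_cast, mul_pow,
      abs_of_pos (by positivity : 0 < (2 : ℝ) ^ m * R ^ m)]
    gcongr
  have key := hasDerivAt_tsum_of_isPreconnected (hc (2 * R)).abs Metric.isOpen_ball
    (convex_ball 0 R).isPreconnected (fun m y _ ↦ (hasDerivAt_pow m y).const_mul (c m))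
    norm_deriv_le (Metric.mem_ball_self (by positivity)) (hc 0)
    (show w ∈ Metric.ball 0 R by simp [R])
  refine key.congr_deriv ?_
  have summable_deriv : Summable fun m ↦ c m * (m * w ^ (m - 1)) :=
    .of_norm_bounded (hc (2 * R)).abs fun m ↦ norm_deriv_le m w (by simp [R])
  rw [summable_deriv.tsum_eq_zero_add]
  simp only [Nat.cast_zero, zero_mul, mul_zero, zero_add, Nat.add_sub_cancel]
  exact tsum_congr fun m ↦ by ring

/-- The coefficients `1 / (m! Γ(μ + m + 1))` of the Bessel–Clifford function of order `μ`. At the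
poles of `Γ` both `Real.Gamma` and its inverse take the value `0`, which is the correct value of
the entire function `1 / Γ`, so that the recurrences below hold for every real `μ`. -/
noncomputable def besselCliffordCoeff (μ : ℝ) (m : ℕ) : ℝ :=
  ((m.factorial : ℝ) * Real.Gamma (μ + m + 1))⁻¹

/-- The Bessel–Clifford function `C_μ(w) = ∑ₘ w^m / (m! Γ(μ + m + 1))`, the entire function with
`J_μ(z) = (z / 2) ^ μ C_μ(-z² / 4)`. -/
noncomputable def besselClifford (μ w : ℝ) : ℝ :=
  ∑' m, besselCliffordCoeff μ m * w ^ m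

theorem succ_mul_besselCliffordCoeff_succ (μ : ℝ) (m : ℕ) :
    (m + 1 : ℕ) * besselCliffordCoeff μ (m + 1) = besselCliffordCoeff (μ + 1) m := by
  have gamma_arg : μ + (m + 1 : ℕ) + 1 = μ + 1 + m + 1 := by push_cast; ring
  have succ_ne_zero : ((m + 1 : ℕ) : ℝ) ≠ 0 := by positivity
  rw [besselCliffordCoeff, besselCliffordCoeff, gamma_arg, Nat.factorial_succ, Nat.cast_mul,
    mul_assoc, mul_inv, mul_inv_cancel_left₀ succ_ne_zero]

theorem add_mul_besselCliffordCoeff_add_one (μ : ℝ) (m : ℕ) :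
    (μ + 1 + m) * besselCliffordCoeff (μ + 1) m = besselCliffordCoeff μ m := by
  rw [besselCliffordCoeff, besselCliffordCoeff, add_right_comm μ 1]
  rcases eq_or_ne (μ + m + 1) 0 with pole | regular
  · simp [pole]
  · rw [Real.Gamma_add_one regular]
    field_simp

theorem summable_besselCliffordCoeff_mul_pow (μ w : ℝ) :
    Summable fun m ↦ besselCliffordCoeff μ m * w ^ m := by
  refine summable_of_ratio_norm_eventually_le (r := 1 / 2) (by norm_num) ?_
  filter_upwards [eventually_ge_atTop ⌈2 * |w| - μ⌉₊] with m hm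
  have hm : 2 * |w| ≤ μ + 1 + m := by linarith [Nat.ceil_le.1 hm]
  have ratio : besselCliffordCoeff μ (m + 1) * ((m + 1 : ℕ) * (μ + 1 + m)) =
      besselCliffordCoeff μ m := by
    rw [← add_mul_besselCliffordCoeff_add_one μ m, ← succ_mul_besselCliffordCoeff_succ μ m]
    ring
  have abs_le : 2 * |w| ≤ (m + 1 : ℕ) * (μ + 1 + m) := by
    refine hm.trans (le_mul_of_one_le_left ((by positivity : 0 ≤ 2 * |w|).trans hm) ?_)
    exact_mod_cast Nat.le_add_left 1 m
  have abs_ratio : |besselCliffordCoeff μ (m + 1)| * ((m + 1 : ℕ) * (μ + 1 + m)) =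
      |besselCliffordCoeff μ m| := by
    rw [← ratio, abs_mul, abs_of_nonneg ((by positivity : 0 ≤ 2 * |w|).trans abs_le)]
  rw [norm_mul, norm_mul, norm_pow, norm_pow, Real.norm_eq_abs, Real.norm_eq_abs, Real.norm_eq_abs,
    ← abs_ratio, pow_succ]
  calc |besselCliffordCoeff μ (m + 1)| * (|w| ^ m * |w|)
      = 1 / 2 * (|besselCliffordCoeff μ (m + 1)| * (2 * |w|) * |w| ^ m) := by ring
    _ ≤ _ := by gcongr

theorem hasDerivAt_besselClifford (μ w : ℝ) :
    HasDerivAt (besselClifford μ) (besselClifford (μ + 1) w) w := by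
  refine (hasDerivAt_tsum_mul_pow (summable_besselCliffordCoeff_mul_pow μ) w).congr_deriv ?_
  simp only [succ_mul_besselCliffordCoeff_succ, besselClifford]

theorem continuous_besselClifford (μ : ℝ) : Continuous (besselClifford μ) :=
  continuous_iff_continuousAt.2 fun w ↦ (hasDerivAt_besselClifford μ w).continuousAt

theorem besselClifford_apply_zero (μ : ℝ) : besselClifford μ 0 = (Real.Gamma (μ + 1))⁻¹ := by
  rw [besselClifford, tsum_eq_single 0 fun m hm ↦ by simp [hm]]
  simp [besselCliffordCoeff]

theorem besselClifford_eq_add (μ w : ℝ) :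
    besselClifford μ w =
      (μ + 1) * besselClifford (μ + 1) w + w * besselClifford (μ + 1 + 1) w := by
  have hasSum (μ) := (summable_besselCliffordCoeff_mul_pow μ w).hasSum
  have hasSum_nat_mul : HasSum (fun m : ℕ ↦ m * (besselCliffordCoeff (μ + 1) m * w ^ m))
      (w * besselClifford (μ + 1 + 1) w) := by
    rw [← hasSum_nat_add_iff' 1]
    simp only [Finset.sum_range_one, Nat.cast_zero, zero_mul, sub_zero]
    refine ((hasSum (μ + 1 + 1)).mul_left w).congr_fun fun m ↦ ?_
    rw [← succ_mul_besselCliffordCoeff_succ (μ + 1)]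
    ring
  refine (hasSum μ).unique ((((hasSum (μ + 1)).mul_left (μ + 1)).add hasSum_nat_mul).congr_fun ?_)
  intro m
  rw [← add_mul_besselCliffordCoeff_add_one]
  ring

theorem besselJ_eq_rpow_mul_besselClifford (μ : ℝ) {z : ℝ} (hz : 0 < z) :
    besselJ μ z = (z / 2) ^ μ * besselClifford μ (-(z ^ 2 / 4)) := by
  rw [besselJ, besselClifford, ← tsum_mul_left]
  refine tsum_congr fun m ↦ ?_
  rw [Real.rpow_add (by positivity), ← Nat.cast_ofNat (n := 2), ← Nat.cast_mul, Real.rpow_natCast,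
    pow_mul, besselCliffordCoeff, neg_pow (z ^ 2 / 4)]
  ring

theorem besselJ_apply_zero {ν : ℝ} (hν : 0 < ν) : besselJ ν 0 = 0 := by
  have exponent_ne_zero (m : ℕ) : ν + 2 * (m : ℝ) ≠ 0 := by positivity
  simp [besselJ, Real.zero_rpow (exponent_ne_zero _)]

theorem continuousOn_besselJ {ν : ℝ} (hν : 0 < ν) : ContinuousOn (besselJ ν) (Ici 0) := by
  have continuous_factored : Continuous fun z : ℝ ↦
      (z / 2) ^ ν * besselClifford ν (-(z ^ 2 / 4)) :=
    ((continuous_id.div_const 2).rpow_const fun _ ↦ .inr hν.le).mul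
      ((continuous_besselClifford ν).comp (by fun_prop))
  refine continuous_factored.continuousOn.congr fun z hz ↦ ?_
  rcases (mem_Ici.1 hz).eq_or_lt with rfl | hz
  · simp [besselJ_apply_zero hν, Real.zero_rpow hν.ne']
  · exact besselJ_eq_rpow_mul_besselClifford ν hz

theorem eventually_besselJ_ne_zero {ν : ℝ} (hν : -1 < ν) : ∀ᶠ z in 𝓝[>] 0, besselJ ν z ≠ 0 := by
  have continuous_factor : Continuous fun z : ℝ ↦ besselClifford ν (-(z ^ 2 / 4)) :=
    (continuous_besselClifford ν).comp (by fun_prop)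
  have factor_ne_zero : besselClifford ν (-(0 ^ 2 / 4)) ≠ 0 := by
    simpa [besselClifford_apply_zero] using (Real.Gamma_pos_of_pos (by linarith : 0 < ν + 1)).ne'
  filter_upwards [nhdsWithin_le_nhds (continuous_factor.continuousAt.eventually_ne factor_ne_zero),
    self_mem_nhdsWithin] with z factor_ne hz
  have hz : 0 < z := hz
  rw [besselJ_eq_rpow_mul_besselClifford ν hz]
  exact mul_ne_zero (by positivity) factor_ne

theorem besselJ_sub_one_add_besselJ_add_one (μ : ℝ) {z : ℝ} (hz : 0 < z) :
    besselJ (μ - 1) z + besselJ (μ + 1) z = 2 * μ / z * besselJ μ z := by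
  have recurrence := besselClifford_eq_add (μ - 1) (-(z ^ 2 / 4))
  rw [sub_add_cancel] at recurrence
  rw [besselJ_eq_rpow_mul_besselClifford _ hz, besselJ_eq_rpow_mul_besselClifford _ hz,
    besselJ_eq_rpow_mul_besselClifford _ hz, recurrence, Real.rpow_add_one (by positivity),
    Real.rpow_sub_one (by positivity)]
  field_simp
  ring

theorem hasDerivAt_besselJ (μ : ℝ) {z : ℝ} (hz : 0 < z) :
    HasDerivAt (besselJ μ) (μ / z * besselJ μ z - besselJ (μ + 1) z) z := by
  have hasDerivAt_power : HasDerivAt (fun z : ℝ ↦ (z / 2) ^ μ) (1 / 2 * μ * (z / 2) ^ (μ - 1)) z :=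
    ((hasDerivAt_id z).div_const 2).rpow_const (.inl (by positivity))
  have hasDerivAt_arg : HasDerivAt (fun z : ℝ ↦ -(z ^ 2 / 4)) (-(2 * z / 4)) z := by
    simpa using ((hasDerivAt_pow 2 z).div_const 4).fun_neg
  have hasDerivAt_factored := hasDerivAt_power.mul
    ((hasDerivAt_besselClifford μ (-(z ^ 2 / 4))).comp z hasDerivAt_arg)
  refine (hasDerivAt_factored.congr_of_eventuallyEq ?_).congr_deriv ?_
  · filter_upwards [lt_mem_nhds hz] with y hy using besselJ_eq_rpow_mul_besselClifford μ hy
  · rw [besselJ_eq_rpow_mul_besselClifford _ hz, besselJ_eq_rpow_mul_besselClifford _ hz,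
      Real.rpow_add_one (by positivity), Real.rpow_sub_one (by positivity)]
    simp only [Function.comp_apply]
    field_simp
    ring

theorem differentiableAt_besselJ (μ : ℝ) {z : ℝ} (hz : 0 < z) : DifferentiableAt ℝ (besselJ μ) z :=
  (hasDerivAt_besselJ μ hz).differentiableAt

theorem mul_deriv_besselJ (μ : ℝ) {z : ℝ} (hz : 0 < z) :
    z * deriv (besselJ μ) z = μ * besselJ μ z - z * besselJ (μ + 1) z := by
  rw [(hasDerivAt_besselJ μ hz).deriv]
  field_simp

theorem besselJ_sub_one (μ : ℝ) {z : ℝ} (hz : 0 < z) :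
    besselJ (μ - 1) z = deriv (besselJ μ) z + μ / z * besselJ μ z := by
  rw [(hasDerivAt_besselJ μ hz).deriv]
  linear_combination besselJ_sub_one_add_besselJ_add_one μ hz

/-- Bessel's differential equation in self-adjoint form. -/
theorem hasDerivAt_mul_deriv_besselJ (μ : ℝ) {z : ℝ} (hz : 0 < z) :
    HasDerivAt (fun z ↦ z * deriv (besselJ μ) z) ((μ ^ 2 / z - z) * besselJ μ z) z := by
  have deriv_succ : deriv (besselJ (μ + 1)) z = besselJ μ z - (μ + 1) / z * besselJ (μ + 1) z := by
    have := besselJ_sub_one (μ + 1) hz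
    rw [add_sub_cancel_right] at this
    linarith
  have hasDerivAt_expanded := ((hasDerivAt_besselJ μ hz).const_mul μ).sub
    ((hasDerivAt_id z).mul (differentiableAt_besselJ (μ + 1) hz).hasDerivAt)
  refine (hasDerivAt_expanded.congr_of_eventuallyEq ?_).congr_deriv ?_
  · filter_upwards [lt_mem_nhds hz] with y hy using mul_deriv_besselJ μ hy
  · rw [deriv_succ, id]
    field_simp
    ring

/-- Lommel's form `(z J_ν′(z))² + (z² - ν²) J_ν(z)²`, a closed form of `2 ∫₀ᶻ t J_ν(t)² dt`. -/
noncomputable def lommelForm (ν z : ℝ) : ℝ :=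
  (z * deriv (besselJ ν) z) ^ 2 + (z ^ 2 - ν ^ 2) * besselJ ν z ^ 2

theorem hasDerivAt_lommelForm (ν : ℝ) {z : ℝ} (hz : 0 < z) :
    HasDerivAt (lommelForm ν) (2 * z * besselJ ν z ^ 2) z := by
  have hasDerivAt_sum := ((hasDerivAt_mul_deriv_besselJ ν hz).pow 2).add
    (((hasDerivAt_pow 2 z).sub_const (ν ^ 2)).mul
      ((differentiableAt_besselJ ν hz).hasDerivAt.pow 2))
  refine hasDerivAt_sum.congr_deriv ?_
  simp only [Pi.pow_apply]
  field_simp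
  push_cast
  ring

section

variable {ν z a b : ℝ}

theorem lommelForm_apply_zero (hν : 0 < ν) : lommelForm ν 0 = 0 := by
  simp [lommelForm, besselJ_apply_zero hν]

theorem continuousOn_lommelForm (hν : 0 < ν) : ContinuousOn (lommelForm ν) (Ici 0) := by
  have continuousOn_succ := continuousOn_besselJ (ν := ν + 1) (by positivity)
  have continuousOn_mul_deriv : ContinuousOn (fun z ↦ z * deriv (besselJ ν) z) (Ici 0) := by
    refine (((continuousOn_besselJ hν).const_mul ν).sub
      (continuousOn_id.mul continuousOn_succ)).congr fun z hz ↦ ?_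
    rcases (mem_Ici.1 hz).eq_or_lt with rfl | hz
    · simp [besselJ_apply_zero hν]
    · exact mul_deriv_besselJ ν hz
  exact (continuousOn_mul_deriv.pow 2).add
    (((continuousOn_id.pow 2).sub continuousOn_const).mul ((continuousOn_besselJ hν).pow 2))

theorem monotoneOn_lommelForm (hν : 0 < ν) : MonotoneOn (lommelForm ν) (Ici 0) := by
  refine monotoneOn_of_hasDerivWithinAt_nonneg (convex_Ici 0) (continuousOn_lommelForm hν)
    (f' := fun z ↦ 2 * z * besselJ ν z ^ 2) ?_ ?_
  all_goals
    intro z hz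
    have hz : 0 < z := by simpa using hz
  · exact (hasDerivAt_lommelForm ν hz).hasDerivWithinAt
  · positivity

theorem lommelForm_pos (hν : 0 < ν) (hz : 0 < z) : 0 < lommelForm ν z := by
  have mono := monotoneOn_lommelForm hν
  by_contra! nonpos
  have eq_zero : ∀ y ∈ Ioo 0 z, lommelForm ν y = 0 := by
    intro y hy
    refine le_antisymm ((mono hy.1.le hz.le hy.2.le).trans nonpos) ?_
    exact (lommelForm_apply_zero hν).symm.trans_le (mono self_mem_Ici hy.1.le hy.1.le)
  obtain ⟨y, besselJ_ne, hy⟩ :=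
    ((eventually_besselJ_ne_zero (by linarith : -1 < ν)).and (Ioo_mem_nhdsGT hz)).exists
  have deriv_eq_zero : 2 * y * besselJ ν y ^ 2 = 0 := by
    refine (hasDerivAt_lommelForm ν hy.1).unique ?_
    refine (hasDerivAt_const y 0).congr_of_eventuallyEq ?_
    filter_upwards [Ioo_mem_nhds hy.1 hy.2] with t ht using eq_zero t ht
  have y_pos := hy.1
  exact (by positivity : 2 * y * besselJ ν y ^ 2 ≠ 0) deriv_eq_zero

theorem deriv_besselJ_ne_zero_of_besselJ_eq_zero (hν : 0 < ν) (hz : 0 < z) (hJ : besselJ ν z = 0) :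
    deriv (besselJ ν) z ≠ 0 := by
  intro hJ'
  simpa [lommelForm, hJ, hJ'] using lommelForm_pos hν hz

theorem lt_of_deriv_besselJ_eq_zero (hν : 0 < ν) (hz : 0 < z) (hJ' : deriv (besselJ ν) z = 0) :
    ν < z := by
  have pos : 0 < (z ^ 2 - ν ^ 2) * besselJ ν z ^ 2 := by
    simpa [lommelForm, hJ'] using lommelForm_pos hν hz
  have sq_lt : 0 < z ^ 2 - ν ^ 2 := pos_of_mul_pos_left pos (sq_nonneg _)
  exact lt_of_pow_lt_pow_left₀ 2 hz.le (by linarith)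

theorem besselJ_sub_one_sub_besselJ_ne_zero (hν : 0 < ν) (hz : 0 < z) (hJ : besselJ ν z = 0) :
    besselJ (ν - 1) z - besselJ ν z ≠ 0 := by
  simpa [besselJ_sub_one ν hz, hJ] using deriv_besselJ_ne_zero_of_besselJ_eq_zero hν hz hJ

theorem hasDerivAt_mul_logDeriv_besselJ (hz : 0 < z) (hJ : besselJ ν z ≠ 0) :
    HasDerivAt (fun z ↦ z * logDeriv (besselJ ν) z)
      (-(lommelForm ν z / (z * besselJ ν z ^ 2))) z := by
  have hasDerivAt_div := (hasDerivAt_mul_deriv_besselJ ν hz).div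
    (differentiableAt_besselJ ν hz).hasDerivAt hJ
  refine (hasDerivAt_div.congr_of_eventuallyEq (.of_forall fun y ↦ ?_)).congr_deriv ?_
  · simp only [logDeriv_apply, Pi.div_apply, mul_div_assoc]
  · rw [lommelForm]
    field_simp
    ring

theorem strictAntiOn_mul_logDeriv_besselJ (hν : 0 < ν) (ha : 0 ≤ a)
    (hne : ∀ z ∈ Ioo a b, besselJ ν z ≠ 0) :
    StrictAntiOn (fun z ↦ z * logDeriv (besselJ ν) z) (Ioo a b) := by
  have hasDerivAt_ratio : ∀ z ∈ Ioo a b, HasDerivAt (fun z ↦ z * logDeriv (besselJ ν) z)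
      (-(lommelForm ν z / (z * besselJ ν z ^ 2))) z :=
    fun z hz ↦ hasDerivAt_mul_logDeriv_besselJ (ha.trans_lt hz.1) (hne z hz)
  refine strictAntiOn_of_deriv_neg (convex_Ioo a b)
    (fun z hz ↦ (hasDerivAt_ratio z hz).continuousAt.continuousWithinAt) fun z hz ↦ ?_
  rw [interior_Ioo] at hz
  have z_pos : 0 < z := ha.trans_lt hz.1
  have lommel_pos := lommelForm_pos hν z_pos
  have besselJ_ne := hne z hz
  rw [(hasDerivAt_ratio z hz).deriv]
  exact neg_neg_of_pos (by positivity)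

theorem mul_logDeriv_besselJ_eq_sub (hz : 0 < z) (hJ : besselJ ν z ≠ 0)
    (h : besselJ (ν - 1) z - besselJ ν z = 0) : z * logDeriv (besselJ ν) z = z - ν := by
  rw [besselJ_sub_one ν hz] at h
  rw [logDeriv_apply]
  field_simp at h ⊢
  linarith

theorem hasDerivAt_rpow_mul_exp_neg_mul_besselJ (hz : 0 < z) :
    HasDerivAt (fun z ↦ z ^ ν * Real.exp (-z) * besselJ ν z)
      (z ^ ν * Real.exp (-z) * (besselJ (ν - 1) z - besselJ ν z)) z := by
  have hasDerivAt_weight := (Real.hasDerivAt_rpow_const (p := ν) (.inl hz.ne')).mul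
    (hasDerivAt_neg z).exp
  refine (hasDerivAt_weight.mul (differentiableAt_besselJ ν hz).hasDerivAt).congr_deriv ?_
  rw [besselJ_sub_one ν hz, Real.rpow_sub_one hz.ne']
  simp only [Pi.mul_apply]
  field_simp
  ring

theorem existsUnique_deriv_besselJ_eq_zero (hν : 0 < ν) (ha : 0 ≤ a)
    (hne : ∀ z ∈ Ioo a b, besselJ ν z ≠ 0) (hab : a < b) (hJa : besselJ ν a = 0)
    (hJb : besselJ ν b = 0) : ∃! z, z ∈ Ioo a b ∧ deriv (besselJ ν) z = 0 := by
  obtain ⟨q, hq, hJ'q⟩ := exists_deriv_eq_zero hab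
    ((continuousOn_besselJ hν).mono fun z hz ↦ ha.trans hz.1) (hJa.trans hJb.symm)
  refine ⟨q, ⟨hq, hJ'q⟩, fun z hz ↦ ?_⟩
  refine (strictAntiOn_mul_logDeriv_besselJ hν ha hne).injOn hz.1 hq ?_
  simp only [logDeriv_apply, hz.2, hJ'q, zero_div, mul_zero]

theorem strictAntiOn_mul_logDeriv_besselJ_sub (hν : 0 < ν) (ha : 0 ≤ a)
    (hne : ∀ z ∈ Ioo a b, besselJ ν z ≠ 0) :
    StrictAntiOn (fun z ↦ z * logDeriv (besselJ ν) z - (z - ν)) (Ioo a b) := by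
  intro x hx y hy hxy
  have := strictAntiOn_mul_logDeriv_besselJ hν ha hne hx hy hxy
  dsimp only at this ⊢
  linarith

theorem existsUnique_besselJ_sub_one_sub_besselJ_eq_zero (hν : 0 < ν) (ha : 0 ≤ a)
    (hne : ∀ z ∈ Ioo a b, besselJ ν z ≠ 0) (hab : a < b) (hJa : besselJ ν a = 0)
    (hJb : besselJ ν b = 0) :
    ∃! z, z ∈ Ioo a b ∧ besselJ (ν - 1) z - besselJ ν z = 0 := by
  have continuousOn_weighted :
      ContinuousOn (fun z ↦ z ^ ν * Real.exp (-z) * besselJ ν z) (Icc a b) :=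
    ((continuousOn_id.rpow_const fun _ _ ↦ .inr hν.le).mul (by fun_prop)).mul
      ((continuousOn_besselJ hν).mono fun z hz ↦ ha.trans hz.1)
  obtain ⟨p, hp, hp0⟩ := exists_hasDerivAt_eq_zero hab continuousOn_weighted (by simp [hJa, hJb])
    fun z hz ↦ hasDerivAt_rpow_mul_exp_neg_mul_besselJ (ha.trans_lt hz.1)
  have weight_pos : 0 < p ^ ν * Real.exp (-p) := by
    have p_pos := ha.trans_lt hp.1
    positivity
  have ratio_eq : ∀ z ∈ Ioo a b, besselJ (ν - 1) z - besselJ ν z = 0 →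
      z * logDeriv (besselJ ν) z - (z - ν) = 0 := fun z hz h ↦
    sub_eq_zero.2 (mul_logDeriv_besselJ_eq_sub (ha.trans_lt hz.1) (hne z hz) h)
  have hp0 := (mul_eq_zero_iff_left weight_pos.ne').1 hp0
  refine ⟨p, ⟨hp, hp0⟩, fun z hz ↦ ?_⟩
  refine (strictAntiOn_mul_logDeriv_besselJ_sub hν ha hne).injOn hz.1 hp ?_
  exact (ratio_eq z hz.1 hz.2).trans (ratio_eq p hp hp0).symm

theorem lt_of_besselJ_sub_one_sub_besselJ_eq_zero_of_deriv_eq_zero {p q : ℝ} (hν : 0 < ν)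
    (ha : 0 ≤ a) (hne : ∀ z ∈ Ioo a b, besselJ ν z ≠ 0) (hp : p ∈ Ioo a b) (hq : q ∈ Ioo a b)
    (hp0 : besselJ (ν - 1) p - besselJ ν p = 0) (hq0 : deriv (besselJ ν) q = 0) : p < q := by
  refine ((strictAntiOn_mul_logDeriv_besselJ_sub hν ha hne).lt_iff_gt hq hp).1 ?_
  calc q * logDeriv (besselJ ν) q - (q - ν)
      < 0 := by
        rw [logDeriv_apply, hq0, zero_div, mul_zero]
        linarith [lt_of_deriv_besselJ_eq_zero hν (ha.trans_lt hq.1) hq0]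
    _ = p * logDeriv (besselJ ν) p - (p - ν) := by
        rw [mul_logDeriv_besselJ_eq_sub (ha.trans_lt hp.1) (hne p hp) hp0, sub_self]

end

/-- The sequence `0, x 1, x 2, …`: an enumeration of positive zeros, which starts at index `1`,
preceded by the origin, so that all gaps between zeros have the form
`(withOrigin x k, withOrigin x (k + 1))`. -/
def withOrigin (x : ℕ → ℝ) : ℕ → ℝ :=
  Function.update x 0 0

theorem withOrigin_zero (x : ℕ → ℝ) : withOrigin x 0 = 0 :=
  Function.update_self ..

theorem withOrigin_of_one_le (x : ℕ → ℝ) {k : ℕ} (hk : 1 ≤ k) : withOrigin x k = x k :=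
  Function.update_of_ne (Nat.one_le_iff_ne_zero.1 hk) ..

namespace EnumPosZeros

variable {f g : ℝ → ℝ} {x y : ℕ → ℝ}

theorem strictMono_withOrigin (hx : EnumPosZeros f x) : StrictMono (withOrigin x) := by
  refine strictMono_nat_of_lt_succ fun k ↦ ?_
  rw [withOrigin_of_one_le x (Nat.le_add_left 1 k)]
  rcases k.eq_zero_or_pos with rfl | hk
  · exact (withOrigin_zero x).trans_lt (hx.2.1 1 le_rfl).1
  · rw [withOrigin_of_one_le x hk]
    exact hx.1 hk (Nat.le_add_left 1 k) (Nat.lt_succ_self k)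

theorem withOrigin_nonneg (hx : EnumPosZeros f x) (k : ℕ) : 0 ≤ withOrigin x k :=
  (withOrigin_zero x).symm.trans_le (hx.strictMono_withOrigin.monotone k.zero_le)

theorem apply_withOrigin_eq_zero (hx : EnumPosZeros f x) (hf : f 0 = 0) (k : ℕ) :
    f (withOrigin x k) = 0 := by
  rcases k.eq_zero_or_pos with rfl | hk
  · rwa [withOrigin_zero]
  · rw [withOrigin_of_one_le x hk]
    exact (hx.2.1 k hk).2

theorem ne_zero_of_mem_Ioo_withOrigin (hx : EnumPosZeros f x) (k : ℕ) :
    ∀ z ∈ Ioo (withOrigin x k) (withOrigin x (k + 1)), f z ≠ 0 := by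
  intro z hz hfz
  obtain ⟨m, hm, rfl⟩ := hx.2.2 z ((hx.withOrigin_nonneg k).trans_lt hz.1) hfz
  rw [← withOrigin_of_one_le x hm] at hz
  have k_lt_m := hx.strictMono_withOrigin.lt_iff_lt.1 hz.1
  have m_lt_succ := hx.strictMono_withOrigin.lt_iff_lt.1 hz.2
  omega

theorem mem_Ioo_of_existsUnique (hy : EnumPosZeros g y) {X : ℕ → ℝ} (hX : StrictMono X)
    (hX0 : X 0 = 0) (hne : ∀ k, g (X (k + 1)) ≠ 0)
    (hunique : ∀ k, ∃! z, z ∈ Ioo (X k) (X (k + 1)) ∧ g z = 0) (k : ℕ) :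
    y (k + 1) ∈ Ioo (X k) (X (k + 1)) := by
  obtain ⟨y_strictMono, y_zero, y_surj⟩ := hy
  have exists_index (k : ℕ) : ∃ m, 1 ≤ m ∧ y m ∈ Ioo (X k) (X (k + 1)) := by
    obtain ⟨p, ⟨hp, hgp⟩, -⟩ := hunique k
    obtain ⟨m, hm, rfl⟩ := y_surj p ((hX0.symm.trans_le (hX.monotone k.zero_le)).trans_lt hp.1) hgp
    exact ⟨m, hm, hp⟩
  induction k with
  | zero =>
    obtain ⟨m, hm, hym⟩ := exists_index 0
    exact ⟨hX0.trans_lt (y_zero 1 le_rfl).1,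
      (y_strictMono.monotoneOn self_mem_Ici hm hm).trans_lt hym.2⟩
  | succ k ih =>
    have mem_Ici (n : ℕ) : n + 1 ∈ Ici 1 := Nat.le_add_left 1 n
    constructor
    · have y_lt : y (k + 1) < y (k + 2) := y_strictMono (mem_Ici k) (mem_Ici (k + 1)) (by omega)
      have hg := (y_zero (k + 2) (mem_Ici (k + 1))).2
      by_contra! y_le
      rcases y_le.eq_or_lt with y_eq | y_lt_X
      · exact hne k (y_eq ▸ hg)
      · exact y_lt.ne ((hunique k).unique ⟨ih, (y_zero (k + 1) (mem_Ici k)).2⟩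
          ⟨⟨ih.1.trans y_lt, y_lt_X⟩, hg⟩)
    · obtain ⟨m, hm, hym⟩ := exists_index (k + 1)
      have index_lt : k + 1 < m := (y_strictMono.lt_iff_lt (mem_Ici k) hm).1 (ih.2.trans hym.1)
      exact (y_strictMono.monotoneOn (mem_Ici (k + 1)) hm index_lt).trans_lt hym.2

end EnumPosZeros

theorem stmt6_general (ν : ℝ) (hν : 0 < ν) (k : ℕ) (hk : 1 ≤ k)
    (jn jpn lam : ℕ → ℝ)
    (hjn : EnumPosZeros (besselJ ν) jn)
    (hjpn : EnumPosZeros (deriv (besselJ ν)) jpn)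
    (hlam : EnumPosZeros (fun z => besselJ (ν - 1) z - besselJ ν z) lam) :
    jn k < lam (k + 1) ∧ lam (k + 1) < jpn (k + 1) ∧ jpn (k + 1) < jn (k + 1) := by
  have hX := hjn.strictMono_withOrigin
  have hJ := hjn.apply_withOrigin_eq_zero (besselJ_apply_zero hν)
  have nonneg := hjn.withOrigin_nonneg
  have ne_zero := hjn.ne_zero_of_mem_Ioo_withOrigin
  have succ_pos (k : ℕ) : 0 < withOrigin jn (k + 1) := (nonneg k).trans_lt (hX k.lt_succ_self)
  have lam_mem := hlam.mem_Ioo_of_existsUnique hX (withOrigin_zero jn)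
    (fun k ↦ besselJ_sub_one_sub_besselJ_ne_zero hν (succ_pos k) (hJ (k + 1)))
    (fun k ↦ existsUnique_besselJ_sub_one_sub_besselJ_eq_zero hν (nonneg k) (ne_zero k)
      (hX k.lt_succ_self) (hJ k) (hJ (k + 1))) k
  have jpn_mem := hjpn.mem_Ioo_of_existsUnique hX (withOrigin_zero jn)
    (fun k ↦ deriv_besselJ_ne_zero_of_besselJ_eq_zero hν (succ_pos k) (hJ (k + 1)))
    (fun k ↦ existsUnique_deriv_besselJ_eq_zero hν (nonneg k) (ne_zero k)
      (hX k.lt_succ_self) (hJ k) (hJ (k + 1))) k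
  have lam_lt_jpn : lam (k + 1) < jpn (k + 1) :=
    lt_of_besselJ_sub_one_sub_besselJ_eq_zero_of_deriv_eq_zero hν (nonneg k) (ne_zero k)
      lam_mem jpn_mem (hlam.2.1 _ (Nat.le_add_left 1 k)).2 (hjpn.2.1 _ (Nat.le_add_left 1 k)).2
  rw [← withOrigin_of_one_le jn hk, ← withOrigin_of_one_le jn (Nat.le_add_left 1 k)]
  exact ⟨lam_mem.1, lam_lt_jpn, jpn_mem.2⟩

/-- For `ν ≥ 1` and every `k ≥ 1`,
`j_{ν,k} < λ⁻_{ν−1,k+1} < j′_{ν,k+1} < j_{ν,k+1}`. -/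
theorem stmt6 (ν : ℝ) (hν : 1 ≤ ν) (k : ℕ) (hk : 1 ≤ k)
    (jn jpn lam : ℕ → ℝ)
    (hjn : EnumPosZeros (besselJ ν) jn)
    (hjpn : EnumPosZeros (deriv (besselJ ν)) jpn)
    (hlam : EnumPosZeros (fun z => besselJ (ν - 1) z - besselJ ν z) lam) :
    jn k < lam (k + 1) ∧ lam (k + 1) < jpn (k + 1) ∧ jpn (k + 1) < jn (k + 1) :=
  stmt6_general ν (by linarith) k hk jn jpn lam hjn hjpn hlam
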